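/- If a and b are linked by I over M, then Supp(M/IM) = Supp(M/aM) ∪ Supp(M/bM). -/

import Mathlib

open RingTheory.Sequence

/-- The colon submodule `N :_M a = {m ∈ M | a m ⊆ N}`. -/
def Submodule.colonBy {R M : Type*} [CommRing R] [AddCommGroup M] [Module R M]
    (N : Submodule R M) (a : Ideal R) : Submodule R M :=
  ⨅ r ∈ a, N.comap (LinearMap.lsmul R M r)
/-- `a` and `b` are linked by `I` over `M`: `I ⊆ a ∩ b` is generated by an `M`-regular
sequence, `aM ≠ M ≠ bM`, `IM :_M a = bM` and `IM :_M b = aM`. -/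
def Ideal.LinkedBy (R M : Type*) [CommRing R] [AddCommGroup M] [Module R M]
    (a b I : Ideal R) : Prop :=
  I ≤ a ⊓ b ∧
  (∃ rs : List R, I = Ideal.ofList rs ∧ RingTheory.Sequence.IsRegular M rs) ∧
  a • (⊤ : Submodule R M) ≠ ⊤ ∧ b • (⊤ : Submodule R M) ≠ ⊤ ∧
  (I • ⊤ : Submodule R M).colonBy a = b • (⊤ : Submodule R M) ∧
  (I • ⊤ : Submodule R M).colonBy b = a • (⊤ : Submodule R M)

theorem Submodule.mem_colonBy {R M : Type*} [CommRing R] [AddCommGroup M] [Module R M]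
    {N : Submodule R M} {a : Ideal R} {m : M} :
    m ∈ N.colonBy a ↔ ∀ r ∈ a, r • m ∈ N := by
  simp [Submodule.colonBy]

/-- If `bM ⊆ N :_M a`, then `a * b` annihilates `M ⧸ N`. -/
theorem Ideal.mul_le_annihilator_quotient_of_le_colonBy {R M : Type*} [CommRing R]
    [AddCommGroup M] [Module R M] {a b : Ideal R} {N : Submodule R M}
    (h : b • (⊤ : Submodule R M) ≤ N.colonBy a) :
    a * b ≤ Module.annihilator R (M ⧸ N) := by
  refine Ideal.mul_le.2 fun r hr s hs => Module.mem_annihilator.2 fun x => ?_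
  obtain ⟨m, rfl⟩ := Submodule.Quotient.mk_surjective N x
  rw [← Submodule.Quotient.mk_smul, Submodule.Quotient.mk_eq_zero, mul_smul]
  exact Submodule.mem_colonBy.1 (h (Submodule.smul_mem_smul hs Submodule.mem_top)) r hr

/-- If `a` and `b` are linked by `I` over `M`, then
`Supp (M/IM) = Supp (M/aM) ∪ Supp (M/bM)`. -/
theorem support_quot_eq_of_linked {R M : Type*} [CommRing R] [IsNoetherianRing R]
    [AddCommGroup M] [Module R M] [Module.Finite R M]
    (a b I : Ideal R) (h : Ideal.LinkedBy R M a b I) :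
    Module.support R (M ⧸ (I • ⊤ : Submodule R M)) =
      Module.support R (M ⧸ (a • ⊤ : Submodule R M)) ∪
        Module.support R (M ⧸ (b • ⊤ : Submodule R M)) := by
  obtain ⟨hI, -, -, -, hb, -⟩ := h
  ext p
  constructor
  · intro hp
    have hab : a * b ≤ p.asIdeal :=
      (Ideal.mul_le_annihilator_quotient_of_le_colonBy hb.ge).trans
        (Module.mem_support_iff_of_finite.1 hp)
    rw [Module.support_quotient] at hp
    simp only [Module.support_quotient]
    exact (p.2.mul_le.1 hab).imp (fun h => ⟨hp.1, h⟩) (fun h => ⟨hp.1, h⟩)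
  · simp only [Module.support_quotient]
    rintro (⟨hM, hp⟩ | ⟨hM, hp⟩)
    · exact ⟨hM, (hI.trans inf_le_left).trans hp⟩
    · exact ⟨hM, (hI.trans inf_le_right).trans hp⟩
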